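/- For any canonical states w, u ∈ W and any formula B^T_X φ ∈ F(w), if w ∼_X u and T ⊆ 𝒯_u, then φ ∈ F(u). -/

import Mathlib

/- Language: formulas over atomic propositions P, data variables V, actors 𝒜 = A.
   `bel T X φ` is B^T_X φ ; `str C T X φ` is [C]^T_X φ. -/
inductive Formula (P V A : Type) : Type
  | atom : P → Formula P V A
  | neg : Formula P V A → Formula P V A
  | imp : Formula P V A → Formula P V A → Formula P V A
  | bel : Set V → Set V → Formula P V A → Formula P V A
  | str : Set A → Set V → Set V → Formula P V A → Formula P V A

variable {P V A : Type}

/-- Propositional tautologies: true under every valuation respecting ¬ and →. -/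
def Tautology (φ : Formula P V A) : Prop :=
  ∀ v : Formula P V A → Prop,
    (∀ ψ, v (Formula.neg ψ) ↔ ¬ v ψ) →
    (∀ ψ χ, v (Formula.imp ψ χ) ↔ (v ψ → v χ)) →
    v φ

/-- Theorems of the logical system of doxastic strategies. -/
inductive Thm : Formula P V A → Prop
  | taut {φ : Formula P V A} : Tautology φ → Thm φ
  | truth {X : Set V} {φ : Formula P V A} :
      Thm (Formula.imp (Formula.bel ∅ X φ) φ)
  | negIntro {T X : Set V} {φ : Formula P V A} :
      Thm (Formula.imp (Formula.neg (Formula.bel T X φ))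
        (Formula.bel ∅ X (Formula.neg (Formula.bel T X φ))))
  | distrib {T X : Set V} {φ ψ : Formula P V A} :
      Thm (Formula.imp (Formula.bel T X (Formula.imp φ ψ))
        (Formula.imp (Formula.bel T X φ) (Formula.bel T X ψ)))
  | trust {T X Y : Set V} {φ : Formula P V A} :
      Thm (Formula.bel T X (Formula.imp (Formula.bel T Y φ) φ))
  | monoB {T T' X X' : Set V} {φ : Formula P V A} :
      T ⊆ T' → X ⊆ X' →
      Thm (Formula.imp (Formula.bel T X φ) (Formula.bel T' X' φ))
  | monoS {C C' : Set A} {T T' X X' : Set V} {φ : Formula P V A} :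
      T ⊆ T' → X ⊆ X' → C ⊆ C' →
      Thm (Formula.imp (Formula.str C T X φ) (Formula.str C' T' X' φ))
  | coop {C D : Set A} {T X : Set V} {φ ψ : Formula P V A} :
      C ∩ D = ∅ →
      Thm (Formula.imp (Formula.str C T X (Formula.imp φ ψ))
        (Formula.imp (Formula.str D T X φ) (Formula.str (C ∪ D) T X ψ)))
  | strIntro₁ {C : Set A} {T X : Set V} {φ : Formula P V A} :
      Thm (Formula.imp (Formula.str C T X φ) (Formula.bel T X (Formula.str C T X φ)))
  | strIntro₂ {C : Set A} {T X : Set V} {φ : Formula P V A} :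
      Thm (Formula.imp (Formula.bel T X (Formula.str C T X φ)) (Formula.str C T X φ))
  | unavoid {T X Y : Set V} {φ : Formula P V A} :
      Thm (Formula.imp (Formula.bel T X (Formula.str ∅ T Y φ)) (Formula.str ∅ T X φ))
  | pub {T : Set V} {φ : Formula P V A} :
      Thm (Formula.imp (Formula.bel T ∅ φ) (Formula.str ∅ T ∅ φ))
  | mp {φ ψ : Formula P V A} : Thm (Formula.imp φ ψ) → Thm φ → Thm ψ
  | nec {φ : Formula P V A} : Thm φ → Thm (Formula.bel ∅ ∅ φ)

/-- `Deduces F φ`: φ is derivable from F together with the theorems using only Modus Ponens. -/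
inductive Deduces (F : Set (Formula P V A)) : Formula P V A → Prop
  | thm {φ : Formula P V A} : Thm φ → Deduces F φ
  | mem {φ : Formula P V A} : φ ∈ F → Deduces F φ
  | mp {φ ψ : Formula P V A} :
      Deduces F (Formula.imp φ ψ) → Deduces F φ → Deduces F ψ

def Consistent (F : Set (Formula P V A)) : Prop :=
  ¬ ∃ φ : Formula P V A, Deduces F φ ∧ Deduces F (Formula.neg φ)

def MaximalConsistent (F : Set (Formula P V A)) : Prop :=
  Consistent F ∧ ∀ G : Set (Formula P V A), Consistent G → F ⊆ G → F = G

/-- A game. -/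
structure Game (P V A : Type) : Type 1 where
  W : Type
  sim : V → W → W → Prop
  sim_equiv : ∀ x : V, Equivalence (sim x)
  trust : W → Set V
  Δ : Type
  delta_nonempty : Nonempty Δ
  M : W → (A → Δ) → W → Prop
  pi : P → Set W

/-- `w ∼_X u`. -/
def Game.simSet (G : Game P V A) (X : Set V) (w u : G.W) : Prop :=
  ∀ x ∈ X, G.sim x w u

/-- The satisfaction relation `w ⊨ φ` (as `Sat G φ w`). -/
def Sat (G : Game P V A) : Formula P V A → G.W → Prop
  | Formula.atom p, w => w ∈ G.pi p
  | Formula.neg φ, w => ¬ Sat G φ w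
  | Formula.imp φ ψ, w => Sat G φ w → Sat G ψ w
  | Formula.bel T X φ, w =>
      ∀ u : G.W, G.simSet X w u → T ⊆ G.trust u → Sat G φ u
  | Formula.str C T X φ, w =>
      ∃ s : {a : A // a ∈ C} → G.Δ,
        ∀ (u v : G.W) (δ : A → G.Δ),
          G.simSet X w u → T ⊆ G.trust u →
          (∀ (a : A) (h : a ∈ C), s ⟨a, h⟩ = δ a) →
          G.M u δ v → T ⊆ G.trust v → Sat G φ v

/- ===================== Canonical game ===================== -/

/-- One block `X_i, b_i, T_i, F_i` of a canonical state. -/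
structure Block (P V A B : Type) where
  X : Set V
  b : B
  T : Set V
  F : Set (Formula P V A)

variable {B : Type}

/-- `F(w)`: the last set of formulae of the sequence (or `F0` for the root). -/
def cF (F0 : Set (Formula P V A)) (l : List (Block P V A B)) : Set (Formula P V A) :=
  l.getLast?.elim F0 Block.F

/-- `𝒯_w = T(w)`: the last dataset of the sequence (or `T0` for the root). -/
def cTrust (T0 : Set V) (l : List (Block P V A B)) : Set V :=
  l.getLast?.elim T0 Block.T

/-- Membership of a sequence in the set of canonical states `W`. -/
inductive IsState (T0 : Set V) (F0 : Set (Formula P V A)) :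
    List (Block P V A B) → Prop
  | nil :
      (∀ (Y : Set V) (ψ : Formula P V A),
        Formula.imp (Formula.bel T0 Y ψ) ψ ∈ F0) →
      IsState T0 F0 []
  | snoc {l : List (Block P V A B)} {bl : Block P V A B} :
      IsState T0 F0 l →
      MaximalConsistent bl.F →
      (∀ φ : Formula P V A, Formula.bel ∅ bl.X φ ∈ cF F0 l → φ ∈ bl.F) →
      (∀ (Y : Set V) (ψ : Formula P V A),
        Formula.imp (Formula.bel bl.T Y ψ) ψ ∈ bl.F) →
      IsState T0 F0 (l ++ [bl])

/-- The canonical states. -/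
def CState (T0 : Set V) (F0 : Set (Formula P V A)) (B : Type) : Type :=
  {l : List (Block P V A B) // IsState T0 F0 l}

attribute [local instance] Classical.propDecidable

/-- Length of the longest common prefix of two sequences. -/
noncomputable def cpl {α : Type} : List α → List α → Nat
  | a :: as, b :: bs => if a = b then cpl as bs + 1 else 0
  | _, _ => 0

/-- The blocks labelling the edges on the unique simple path between two
nodes of the canonical tree. -/
noncomputable def pathBlocks (w u : List (Block P V A B)) : List (Block P V A B) :=
  w.drop (cpl w u) ++ u.drop (cpl w u)

/-- `w ∼_x u` in the canonical game: every edge along the unique simple path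
between `w` and `u` is labelled with `x`. -/
def csimVar (x : V) (w u : List (Block P V A B)) : Prop :=
  ∀ bl ∈ pathBlocks w u, x ∈ bl.X

/-- `w ∼_X u` in the canonical game. -/
def csim (X : Set V) (w u : List (Block P V A B)) : Prop :=
  ∀ x ∈ X, csimVar x w u

/-- The canonical mechanism `M`. -/
def Mech (T0 : Set V) (F0 : Set (Formula P V A))
    (w : CState T0 F0 B) (δ : A → Formula P V A × CState T0 F0 B)
    (v : CState T0 F0 B) : Prop :=
  ∀ (C : Set A) (T X : Set V) (φ : Formula P V A),
    Formula.str C T X φ ∈ cF F0 w.1 →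
    (∀ a ∈ C, (δ a).1 = φ) →
    (∀ a ∈ C, csim X w.1 (δ a).2.1) →
    T ⊆ cTrust T0 w.1 → T ⊆ cTrust T0 v.1 →
    φ ∈ cF F0 v.1

/-- Satisfaction `w ⊨ φ` on the canonical game (as `CSat T0 F0 φ w`). -/
def CSat (T0 : Set V) (F0 : Set (Formula P V A)) :
    Formula P V A → CState T0 F0 B → Prop
  | Formula.atom p, w => Formula.atom p ∈ cF F0 w.1
  | Formula.neg φ, w => ¬ CSat T0 F0 φ w
  | Formula.imp φ ψ, w => CSat T0 F0 φ w → CSat T0 F0 ψ w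
  | Formula.bel T X φ, w =>
      ∀ u : CState T0 F0 B, csim X w.1 u.1 → T ⊆ cTrust T0 u.1 → CSat T0 F0 φ u
  | Formula.str C T X φ, w =>
      ∃ s : {a : A // a ∈ C} → Formula P V A × CState T0 F0 B,
        ∀ (u v : CState T0 F0 B) (δ : A → Formula P V A × CState T0 F0 B),
          csim X w.1 u.1 → T ⊆ cTrust T0 u.1 →
          (∀ (a : A) (h : a ∈ C), s ⟨a, h⟩ = δ a) →
          Mech T0 F0 u δ v → T ⊆ cTrust T0 v.1 → CSat T0 F0 φ v

/- ===================== Harmony ===================== -/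

/-- Conjunction definable from ¬ and →. -/
def fand (φ ψ : Formula P V A) : Formula P V A :=
  Formula.neg (Formula.imp φ (Formula.neg ψ))

/-- A canonical tautology (verum). -/
noncomputable def verum (P V A : Type) [Nonempty (Formula P V A)] : Formula P V A :=
  Formula.imp (Classical.arbitrary (Formula P V A)) (Classical.arbitrary (Formula P V A))

/-- Conjunction of a finite list of formulae. -/
noncomputable def conjList [Nonempty (Formula P V A)] :
    List (Formula P V A) → Formula P V A
  | [] => verum P V A
  | φ :: l => fand φ (conjList l)

/-- The pair `(F, G)` is in `T`-harmony: `F ⊬ [∅]^T_V ¬⋀G'` for each finite `G' ⊆ G`. -/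
def THarmony [Nonempty (Formula P V A)] (T : Set V)
    (F G : Set (Formula P V A)) : Prop :=
  ∀ l : List (Formula P V A), (∀ ψ ∈ l, ψ ∈ G) →
    ¬ Deduces F (Formula.str ∅ T (Set.univ : Set V) (Formula.neg (conjList l)))

/-! Positive introspection `B^T_X φ → B^∅_X B^T_X φ` is derivable, so along a tree edge labelled
with all of `X` both `B^T_X φ` and `¬B^T_X φ` pass from parent to child. Hence such an edge
preserves membership of `B^T_X φ` in both directions, and it can be carried from `w` to the longest
common prefix of `w` and `u` and from there to `u`. At `u`, the inclusion `T ⊆ 𝒯_u` and the trust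
clause `B^{𝒯_u}_X φ → φ ∈ F(u)` give `φ`. -/

namespace Thm

theorem imp_self (φ : Formula P V A) : Thm (.imp φ φ) :=
  .taut fun v _ hi => by simp only [hi]; exact id

theorem imp_imp_left (φ ψ : Formula P V A) : Thm (.imp φ (.imp ψ φ)) :=
  .taut fun v _ hi => by simp only [hi]; tauto

theorem imp_distrib (φ ψ χ : Formula P V A) :
    Thm (.imp (.imp φ (.imp ψ χ)) (.imp (.imp φ ψ) (.imp φ χ))) :=
  .taut fun v _ hi => by simp only [hi]; tauto

theorem reductio (φ ψ : Formula P V A) :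
    Thm (.imp (.imp φ ψ) (.imp (.imp φ (.neg ψ)) (.neg φ))) :=
  .taut fun v hn hi => by simp only [hi, hn]; tauto

theorem imp_trans {φ ψ χ : Formula P V A} (hφψ : Thm (.imp φ ψ)) (hψχ : Thm (.imp ψ χ)) :
    Thm (.imp φ χ) :=
  .mp (.mp (imp_distrib φ ψ χ) (.mp (imp_imp_left _ φ) hψχ)) hφψ

theorem imp_neg_symm {φ ψ : Formula P V A} (h : Thm (.imp φ (.neg ψ))) :
    Thm (.imp ψ (.neg φ)) :=
  .mp (.taut fun v hn hi => by simp only [hi, hn]; tauto) h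

theorem neg_imp_symm {φ ψ : Formula P V A} (h : Thm (.imp (.neg φ) ψ)) :
    Thm (.imp (.neg ψ) φ) :=
  .mp (.taut fun v hn hi => by simp only [hi, hn]; tauto) h

theorem bel_of_thm (T X : Set V) {φ : Formula P V A} (h : Thm φ) : Thm (.bel T X φ) :=
  .mp (.monoB (Set.empty_subset T) (Set.empty_subset X)) (.nec h)

theorem bel_imp_bel (T X : Set V) {φ ψ : Formula P V A} (h : Thm (.imp φ ψ)) :
    Thm (.imp (.bel T X φ) (.bel T X ψ)) :=
  .mp .distrib (bel_of_thm T X h)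

theorem posIntro (T X : Set V) (φ : Formula P V A) :
    Thm (.imp (.bel T X φ) (.bel ∅ X (.bel T X φ))) := by
  have possible_of_belief :
      Thm (.imp (.bel T X φ) (.neg (.bel ∅ X (.neg (.bel T X φ))))) :=
    imp_neg_symm .truth
  have belief_of_possible :
      Thm (.imp (.neg (.bel ∅ X (.neg (.bel T X φ)))) (.bel T X φ)) :=
    neg_imp_symm .negIntro
  exact (possible_of_belief.imp_trans .negIntro).imp_trans
    (bel_imp_bel ∅ X belief_of_possible)

end Thm

namespace Deduces

variable {F : Set (Formula P V A)} {φ ψ : Formula P V A}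

theorem cut (hφ : Deduces F φ) (hψ : Deduces (insert φ F) ψ) : Deduces F ψ := by
  induction hψ with
  | thm hthm => exact .thm hthm
  | mem hmem =>
    rcases hmem with rfl | hmem
    · exact hφ
    · exact .mem hmem
  | mp _ _ ihimp ihφ => exact .mp ihimp ihφ

theorem imp_of_insert (hψ : Deduces (insert φ F) ψ) : Deduces F (.imp φ ψ) := by
  induction hψ with
  | thm hthm => exact .mp (.thm (.imp_imp_left _ φ)) (.thm hthm)
  | mem hmem =>
    rcases hmem with rfl | hmem
    · exact .thm (.imp_self _)
    · exact .mp (.thm (.imp_imp_left _ φ)) (.mem hmem)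
  | mp _ _ ihimp ihφ => exact .mp (.mp (.thm (.imp_distrib φ _ _)) ihimp) ihφ

theorem neg_of_not_consistent_insert (h : ¬ Consistent (insert φ F)) : Deduces F (.neg φ) := by
  obtain ⟨χ, hχ, hnχ⟩ := not_not.1 h
  exact .mp (.mp (.thm (.reductio φ χ)) hχ.imp_of_insert) hnχ.imp_of_insert

end Deduces

namespace MaximalConsistent

variable {F : Set (Formula P V A)} {φ ψ : Formula P V A}

theorem mem_of_consistent_insert (hF : MaximalConsistent F) (h : Consistent (insert φ F)) :
    φ ∈ F :=
  (hF.2 _ h (Set.subset_insert φ F)).symm ▸ Set.mem_insert φ F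

theorem mem_of_deduces (hF : MaximalConsistent F) (h : Deduces F φ) : φ ∈ F :=
  hF.mem_of_consistent_insert fun ⟨χ, hχ, hnχ⟩ => hF.1 ⟨χ, h.cut hχ, h.cut hnχ⟩

theorem mem_of_thm_imp (hF : MaximalConsistent F) (himp : Thm (.imp φ ψ)) (h : φ ∈ F) : ψ ∈ F :=
  hF.mem_of_deduces (.mp (.thm himp) (.mem h))

theorem neg_mem_of_notMem (hF : MaximalConsistent F) (h : φ ∉ F) : .neg φ ∈ F :=
  hF.mem_of_deduces (.neg_of_not_consistent_insert fun hc => h (hF.mem_of_consistent_insert hc))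

theorem bel_mem_iff_of_accessible {G : Set (Formula P V A)} {X Y : Set V}
    (hF : MaximalConsistent F) (hG : Consistent G)
    (hFG : ∀ χ, Formula.bel ∅ Y χ ∈ F → χ ∈ G) (hXY : X ⊆ Y) (T : Set V) (φ : Formula P V A) :
    .bel T X φ ∈ F ↔ .bel T X φ ∈ G := by
  have mem_child {χ : Formula P V A} (h : .bel ∅ X χ ∈ F) : χ ∈ G :=
    hFG χ (hF.mem_of_thm_imp (.monoB subset_rfl hXY) h)
  constructor
  · intro h
    exact mem_child (hF.mem_of_thm_imp (.posIntro T X φ) h)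
  · intro h
    by_contra hnot
    have hneg : .neg (.bel T X φ) ∈ G :=
      mem_child (hF.mem_of_thm_imp .negIntro (hF.neg_mem_of_notMem hnot))
    exact hG ⟨_, .mem h, .mem hneg⟩

end MaximalConsistent

theorem cF_append_singleton (F0 : Set (Formula P V A)) (l : List (Block P V A B))
    (bl : Block P V A B) : cF F0 (l ++ [bl]) = bl.F := by
  simp [cF]

namespace IsState

variable {T0 : Set V} {F0 : Set (Formula P V A)} {l : List (Block P V A B)}

theorem append_singleton_iff {bl : Block P V A B} :
    IsState T0 F0 (l ++ [bl]) ↔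
      IsState T0 F0 l ∧ MaximalConsistent bl.F ∧
        (∀ φ, Formula.bel ∅ bl.X φ ∈ cF F0 l → φ ∈ bl.F) ∧
        ∀ Y ψ, Formula.imp (.bel bl.T Y ψ) ψ ∈ bl.F := by
  refine ⟨fun h => ?_, fun ⟨hl, hmax, haccess, htrust⟩ => .snoc hl hmax haccess htrust⟩
  generalize heq : l ++ [bl] = l' at h
  cases h with
  | nil => simp at heq
  | snoc hl hmax haccess htrust =>
    obtain ⟨rfl, hbl⟩ := List.append_inj' heq rfl
    obtain rfl := List.singleton_inj.1 hbl
    exact ⟨hl, hmax, haccess, htrust⟩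

theorem maximalConsistent_cF (hF0 : MaximalConsistent F0) (h : IsState T0 F0 l) :
    MaximalConsistent (cF F0 l) := by
  cases h with
  | nil => exact hF0
  | snoc _ hmax _ _ => rwa [cF_append_singleton]

theorem imp_bel_cTrust_mem (h : IsState T0 F0 l) (Y : Set V) (ψ : Formula P V A) :
    .imp (.bel (cTrust T0 l) Y ψ) ψ ∈ cF F0 l := by
  cases h with
  | nil htrust => exact htrust Y ψ
  | snoc _ _ _ htrust => simpa [cF, cTrust] using htrust Y ψ

theorem mem_of_bel_mem (hF0 : MaximalConsistent F0) (h : IsState T0 F0 l) {T X : Set V}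
    {φ : Formula P V A} (hT : T ⊆ cTrust T0 l) (hbel : .bel T X φ ∈ cF F0 l) :
    φ ∈ cF F0 l := by
  have hmax := h.maximalConsistent_cF hF0
  have hbel' : .bel (cTrust T0 l) X φ ∈ cF F0 l :=
    hmax.mem_of_thm_imp (.monoB hT subset_rfl) hbel
  exact hmax.mem_of_deduces (.mp (.mem (h.imp_bel_cTrust_mem X φ)) (.mem hbel'))

theorem bel_mem_append_iff (hF0 : MaximalConsistent F0) {m : List (Block P V A B)}
    (h : IsState T0 F0 (l ++ m)) {X : Set V} (hX : ∀ bl ∈ m, X ⊆ bl.X) (T : Set V)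
    (φ : Formula P V A) :
    .bel T X φ ∈ cF F0 (l ++ m) ↔ .bel T X φ ∈ cF F0 l := by
  induction m using List.reverseRecOn with
  | nil => rw [List.append_nil]
  | append_singleton m bl ih =>
    rw [← List.append_assoc] at h ⊢
    obtain ⟨hparent, hmax, haccess, -⟩ := append_singleton_iff.1 h
    have hXbl : X ⊆ bl.X := hX bl (by simp)
    rw [cF_append_singleton, ← ih hparent fun c hc => hX c (List.mem_append_left _ hc)]
    exact ((hparent.maximalConsistent_cF hF0).bel_mem_iff_of_accessible hmax.1 haccess
      hXbl T φ).symm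

end IsState

theorem take_cpl_eq_take_cpl {α : Type} (w u : List α) :
    w.take (cpl w u) = u.take (cpl w u) := by
  induction w generalizing u with
  | nil => simp [cpl]
  | cons a w ih =>
    cases u with
    | nil => simp [cpl]
    | cons b u =>
      by_cases hab : a = b
      · simp [cpl, hab, ih u]
      · simp [cpl, hab]

theorem csim.exists_append {X : Set V} {w u : List (Block P V A B)} (h : csim X w u) :
    ∃ l m n, w = l ++ m ∧ u = l ++ n ∧ (∀ bl ∈ m, X ⊆ bl.X) ∧ ∀ bl ∈ n, X ⊆ bl.X := by
  have hX : ∀ bl ∈ pathBlocks w u, X ⊆ bl.X := fun bl hbl x hx => h x hx bl hbl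
  refine ⟨w.take (cpl w u), w.drop (cpl w u), u.drop (cpl w u),
    (List.take_append_drop _ w).symm, ?_,
    fun bl hbl => hX bl (List.mem_append_left _ hbl),
    fun bl hbl => hX bl (List.mem_append_right _ hbl)⟩
  rw [take_cpl_eq_take_cpl, List.take_append_drop]

theorem csim.bel_mem_iff {T0 : Set V} {F0 : Set (Formula P V A)} (hF0 : MaximalConsistent F0)
    {w u : List (Block P V A B)} (hw : IsState T0 F0 w) (hu : IsState T0 F0 u) {X : Set V}
    (h : csim X w u) (T : Set V) (φ : Formula P V A) :
    .bel T X φ ∈ cF F0 w ↔ .bel T X φ ∈ cF F0 u := by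
  obtain ⟨l, m, n, rfl, rfl, hm, hn⟩ := h.exists_append
  exact (hw.bel_mem_append_iff hF0 hm T φ).trans (hu.bel_mem_append_iff hF0 hn T φ).symm

theorem belief_child_all_general {T0 : Set V} {F0 : Set (Formula P V A)}
    (hF0 : MaximalConsistent F0) (w u : CState T0 F0 B) {T X : Set V} {φ : Formula P V A}
    (h : .bel T X φ ∈ cF F0 w.1) (hsim : csim X w.1 u.1) (hT : T ⊆ cTrust T0 u.1) :
    φ ∈ cF F0 u.1 :=
  u.2.mem_of_bel_mem hF0 hT ((hsim.bel_mem_iff hF0 w.2 u.2 T φ).1 h)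

/-- for canonical states w, u and any B^T_X φ ∈ F(w), if w ∼_X u and
T ⊆ 𝒯_u, then φ ∈ F(u). -/
theorem belief_child_all {P V A B : Type}
    (T0 : Set V) (F0 : Set (Formula P V A))
    (hF0 : MaximalConsistent F0) (hB : Cardinal.mk A < Cardinal.mk B)
    (w u : CState T0 F0 B) (T X : Set V) (φ : Formula P V A)
    (h : Formula.bel T X φ ∈ cF F0 w.1)
    (hsim : csim X w.1 u.1) (hT : T ⊆ cTrust T0 u.1) :
    φ ∈ cF F0 u.1 :=
  belief_child_all_general hF0 w u h hsim hT
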